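/- (Multivariate Khovanskii-Nathanson theorem) Let S be a commutative monoid and A_1,...,A_r finite nonempty subsets of S. Then there exists a polynomial p(t_1,...,t_r) with rational coefficients such that |h_1 A_1 + ... + h_r A_r| = p(h_1,...,h_r) for all sufficiently large positive integers h_1,...,h_r. -/

import Mathlib

open Pointwise

/-- A sequence of rationals which agrees with a polynomial from some point on. -/
def EventuallyPolynomial (u : ℕ → ℚ) : Prop :=
  ∃ p : Polynomial ℚ, ∃ N : ℕ, ∀ n, N ≤ n → u n = p.eval (n : ℚ)

theorem exists_polynomial_eval_eq_sum_range (p : Polynomial ℚ) :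
    ∃ q : Polynomial ℚ, ∀ n : ℕ, ∑ m ∈ Finset.range n, p.eval (m : ℚ) = q.eval (n : ℚ) := by
  induction p using Polynomial.induction_on' with
  | add p₁ p₂ h₁ h₂ =>
    obtain ⟨q₁, h₁⟩ := h₁
    obtain ⟨q₂, h₂⟩ := h₂
    exact ⟨q₁ + q₂, fun n => by simp [Finset.sum_add_distrib, h₁, h₂]⟩
  | monomial d a =>
    refine ⟨Polynomial.C (a / (d + 1)) *
      (Polynomial.bernoulli d.succ - Polynomial.C (bernoulli d.succ)), fun n => ?_⟩
    have h := Polynomial.sum_range_pow_eq_bernoulli_sub n d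
    have hd : (d : ℚ) + 1 ≠ 0 := by positivity
    simp only [Polynomial.eval_monomial, ← Finset.mul_sum, Polynomial.eval_mul,
      Polynomial.eval_C, Polynomial.eval_sub, ← h]
    field_simp

namespace EventuallyPolynomial

theorem sum_range_succ {u : ℕ → ℚ} (hu : EventuallyPolynomial u) :
    EventuallyPolynomial fun m => ∑ n ∈ Finset.range (m + 1), u n := by
  obtain ⟨p, N, hp⟩ := hu
  obtain ⟨q, hq⟩ := exists_polynomial_eval_eq_sum_range p
  refine ⟨q.comp (Polynomial.X + 1) +
    Polynomial.C (∑ n ∈ Finset.range N, (u n - p.eval (n : ℚ))), N, fun m hm => ?_⟩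
  have h₁ : ∑ n ∈ Finset.range (m + 1), (u n - p.eval (n : ℚ)) =
      ∑ n ∈ Finset.range N, (u n - p.eval (n : ℚ)) := by
    symm
    apply Finset.sum_subset
    · intro n
      simp only [Finset.mem_range]
      omega
    · intro n _ hn
      rw [hp n (by simpa using hn), sub_self]
  have h₂ := hq (m + 1)
  rw [Finset.sum_sub_distrib] at h₁
  push_cast at h₂
  simp only [Polynomial.eval_add, Polynomial.eval_comp, Polynomial.eval_X, Polynomial.eval_one,
    Polynomial.eval_C, ← h₁, ← h₂]
  ring

theorem shift {u : ℕ → ℚ} (hu : EventuallyPolynomial u) (k : ℕ) :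
    EventuallyPolynomial fun m => if k ≤ m then u (m - k) else 0 := by
  obtain ⟨p, N, hp⟩ := hu
  refine ⟨p.comp (Polynomial.X - Polynomial.C (k : ℚ)), N + k, fun m hm => ?_⟩
  have hk : k ≤ m := by omega
  simp [hk, hp (m - k) (by omega), Nat.cast_sub hk]

end EventuallyPolynomial

/-- The span of the products of eventually polynomial functions of the single variables. -/
def eventuallyPolynomialSpan (ι : Type*) [Fintype ι] : Submodule ℚ ((ι → ℕ) → ℚ) :=
  Submodule.span ℚ
    {f | ∃ u : ι → ℕ → ℚ, (∀ i, EventuallyPolynomial (u i)) ∧ f = fun h => ∏ i, u i (h i)}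

theorem exists_mvPolynomial_of_mem_eventuallyPolynomialSpan {ι : Type*} [Fintype ι]
    {f : (ι → ℕ) → ℚ} (hf : f ∈ eventuallyPolynomialSpan ι) :
    ∃ p : MvPolynomial ι ℚ, ∃ N : ℕ, ∀ h : ι → ℕ, (∀ i, N ≤ h i) →
      f h = MvPolynomial.eval (fun i => (h i : ℚ)) p := by
  induction hf using Submodule.span_induction with
  | mem f hf =>
    obtain ⟨u, hu, rfl⟩ := hf
    choose p N hp using hu
    refine ⟨∏ i, Polynomial.aeval (MvPolynomial.X i) (p i), Finset.univ.sup N, fun h hh => ?_⟩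
    rw [map_prod]
    refine Finset.prod_congr rfl fun i _ => ?_
    rw [hp i (h i) ((Finset.le_sup (Finset.mem_univ i)).trans (hh i)),
      ← MvPolynomial.coe_aeval_eq_eval, RingHom.coe_coe, ← Polynomial.aeval_algHom_apply]
    simp [Polynomial.coe_aeval_eq_eval]
  | zero => exact ⟨0, 0, fun h _ => by simp⟩
  | add f g _ _ hf hg =>
    obtain ⟨p, M, hp⟩ := hf
    obtain ⟨q, N, hq⟩ := hg
    refine ⟨p + q, max M N, fun h hh => ?_⟩
    rw [map_add, Pi.add_apply, hp h fun i => (le_max_left _ _).trans (hh i),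
      hq h fun i => (le_max_right _ _).trans (hh i)]
  | smul a f _ hf =>
    obtain ⟨p, N, hp⟩ := hf
    exact ⟨a • p, N, fun h hh => by simp [hp h hh, MvPolynomial.smul_eval]⟩

/-- Convolution with the sequence `v` in the variable `j`. -/
def convolveAt {ι : Type*} [DecidableEq ι] (j : ι) (v : ℕ → ℚ) :
    ((ι → ℕ) → ℚ) →ₗ[ℚ] ((ι → ℕ) → ℚ) where
  toFun f h := ∑ n ∈ Finset.range (h j + 1), v n * f (h - Pi.single j n)
  map_add' f g := by
    ext h
    simp [mul_add, Finset.sum_add_distrib]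
  map_smul' a f := by
    ext h
    simp only [Pi.smul_apply, smul_eq_mul, RingHom.id_apply, Finset.mul_sum]
    exact Finset.sum_congr rfl fun n _ => by ring

theorem convolveAt_mem {ι : Type*} [Fintype ι] [DecidableEq ι] (j : ι) (v : ℕ → ℚ)
    (hv : ∀ u, EventuallyPolynomial u →
      EventuallyPolynomial fun m => ∑ n ∈ Finset.range (m + 1), v n * u (m - n))
    {f : (ι → ℕ) → ℚ} (hf : f ∈ eventuallyPolynomialSpan ι) :
    convolveAt j v f ∈ eventuallyPolynomialSpan ι := by
  induction hf using Submodule.span_induction with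
  | mem f hf =>
    obtain ⟨u, hu, rfl⟩ := hf
    refine Submodule.subset_span ⟨Function.update u j fun m =>
      ∑ n ∈ Finset.range (m + 1), v n * u j (m - n), fun i => ?_, ?_⟩
    · rcases eq_or_ne i j with rfl | hij
      · simpa using hv _ (hu i)
      · simpa [hij] using hu i
    · funext h
      change ∑ n ∈ Finset.range (h j + 1), v n * ∏ i, u i ((h - Pi.single j n : ι → ℕ) i) = _
      rw [← Finset.mul_prod_erase _ _ (Finset.mem_univ j), Function.update_self, Finset.sum_mul]
      refine Finset.sum_congr rfl fun n _ => ?_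
      rw [← Finset.mul_prod_erase _ _ (Finset.mem_univ j), mul_assoc]
      congr 1
      simp only [Pi.sub_apply, Pi.single_eq_same]
      congr 1
      refine Finset.prod_congr rfl fun i hi => ?_
      have hij := Finset.ne_of_mem_erase hi
      simp [hij]
  | zero => simp
  | add f g _ _ hf hg => simpa using add_mem hf hg
  | smul a f _ hf => simpa using Submodule.smul_mem _ a hf

theorem convolveAt_one_mem {ι : Type*} [Fintype ι] [DecidableEq ι] (j : ι)
    {f : (ι → ℕ) → ℚ} (hf : f ∈ eventuallyPolynomialSpan ι) :
    convolveAt j 1 f ∈ eventuallyPolynomialSpan ι := by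
  refine convolveAt_mem j 1 (fun u hu => ?_) hf
  convert hu.sum_range_succ using 2 with m
  simpa using Finset.sum_range_reflect u (m + 1)

theorem convolveAt_single_mem {ι : Type*} [Fintype ι] [DecidableEq ι] (j : ι) (k : ℕ)
    {f : (ι → ℕ) → ℚ} (hf : f ∈ eventuallyPolynomialSpan ι) :
    convolveAt j (Pi.single k 1) f ∈ eventuallyPolynomialSpan ι := by
  refine convolveAt_mem j _ (fun u hu => ?_) hf
  convert hu.shift k using 2 with m
  simp [Pi.single_apply]

/-- A decreasing sequence of lower sets in a well-quasi-order is eventually constant. -/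
theorem exists_forall_ge_eq_of_antitone_isLowerSet {α : Type*} [Preorder α]
    [WellQuasiOrderedLE α] {L : ℕ → Set α} (hL : Antitone L) (hlow : ∀ n, IsLowerSet (L n)) :
    ∃ n₀, ∀ n, n₀ ≤ n → L n = L n₀ := by
  by_contra! hne
  have hstep : ∀ n, ∃ m, n ≤ m ∧ ∃ x ∈ L n, x ∉ L m := fun n => by
    obtain ⟨m, hnm, hm⟩ := hne n
    exact ⟨m, hnm, Set.not_subset.1 fun hsub => hm ((hL hnm).antisymm hsub)⟩
  choose s hs x hx hxs using hstep
  have hmono : Monotone fun k => s^[k] 0 := monotone_nat_of_le_succ fun k => by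
    rw [Function.iterate_succ_apply']
    exact hs _
  obtain ⟨a, b, hab, hle⟩ := wellQuasiOrdered_le fun k => x (s^[k] 0)
  apply hxs (s^[a] 0)
  have h := hL (hmono (Nat.succ_le_of_lt hab)) (hx (s^[b] 0))
  simp only [Function.iterate_succ_apply'] at h
  exact hlow _ hle h

/-- The multidegree of the exponent vector `x`, the `i`-th coordinate being of colour `c i`. -/
def colourWeight {κ ι : Type*} [Fintype κ] [DecidableEq ι] (c : κ → ι) :
    (κ → ℕ) →+ (ι → ℕ) where
  toFun x := ∑ i, Pi.single (c i) (x i)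
  map_zero' := by simp
  map_add' x y := by simp [Pi.single_add, Finset.sum_add_distrib]

theorem colourWeight_apply {κ ι : Type*} [Fintype κ] [DecidableEq ι] (c : κ → ι) (x : κ → ℕ) :
    colourWeight c x = ∑ i, Pi.single (c i) (x i) := rfl

theorem le_colourWeight {κ ι : Type*} [Fintype κ] [DecidableEq ι] (c : κ → ι) (x : κ → ℕ)
    (i : κ) : x i ≤ colourWeight c x (c i) := by
  rw [colourWeight_apply, Finset.sum_apply]
  calc x i = (Pi.single (c i) (x i) : ι → ℕ) (c i) := by simp
    _ ≤ _ := Finset.single_le_sum (f := fun i' => (Pi.single (c i') (x i') : ι → ℕ) (c i))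
      (fun _ _ => Nat.zero_le _) (Finset.mem_univ i)

theorem finite_mem_colourWeight_eq {κ ι : Type*} [Fintype κ] [DecidableEq ι] (c : κ → ι)
    (L : Set (κ → ℕ)) (h : ι → ℕ) : Finite {x // x ∈ L ∧ colourWeight c x = h} := by
  classical
  refine Set.Finite.to_subtype (s := {x | x ∈ L ∧ colourWeight c x = h})
    ((Set.finite_Icc 0 fun i => h (c i)).subset ?_)
  rintro x ⟨-, rfl⟩
  exact ⟨fun _ => Nat.zero_le _, le_colourWeight c x⟩

theorem colourWeight_cons {ι : Type*} [DecidableEq ι] {k : ℕ} (c : Fin (k + 1) → ι) (n : ℕ)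
    (x : Fin k → ℕ) : colourWeight c (Fin.cons n x : Fin (k + 1) → ℕ) =
      Pi.single (c 0) n + colourWeight (fun i => c i.succ) x := by
  simp [colourWeight_apply, Fin.sum_univ_succ]

/-- The number of elements of `L` of multidegree `h`. -/
noncomputable def weightCount {κ ι : Type*} [Fintype κ] [DecidableEq ι] (c : κ → ι)
    (L : Set (κ → ℕ)) (h : ι → ℕ) : ℚ :=
  Nat.card {x // x ∈ L ∧ colourWeight c x = h}

theorem weightCount_eq_sum {ι : Type*} [DecidableEq ι] {k : ℕ} (c : Fin (k + 1) → ι)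
    (L : Set (Fin (k + 1) → ℕ)) (h : ι → ℕ) :
    weightCount c L h = ∑ n ∈ Finset.range (h (c 0) + 1),
      weightCount (fun i => c i.succ) {x | (Fin.cons n x : Fin (k + 1) → ℕ) ∈ L}
        (h - Pi.single (c 0) n) := by
  have hiff : ∀ (n : ℕ) (x : Fin k → ℕ), colourWeight c (Fin.cons n x : Fin (k + 1) → ℕ) = h ↔
      n ≤ h (c 0) ∧ colourWeight (fun i => c i.succ) x = h - Pi.single (c 0) n := by
    intro n x
    rw [colourWeight_cons]
    constructor
    · rintro rfl
      simp
    · rintro ⟨hn, hx⟩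
      rw [hx]
      refine add_tsub_cancel_of_le fun i => ?_
      rcases eq_or_ne i (c 0) with rfl | hi
      · simpa using hn
      · simp [hi]
  let e : {x // x ∈ L ∧ colourWeight c x = h} ≃
      Σ n : Fin (h (c 0) + 1), {x // (Fin.cons (n : ℕ) x : Fin (k + 1) → ℕ) ∈ L ∧
        colourWeight (fun i => c i.succ) x = h - Pi.single (c 0) (n : ℕ)} :=
    { toFun := fun x =>
        have hx := (hiff (x.1 0) (Fin.tail x.1)).1 (by rw [Fin.cons_self_tail]; exact x.2.2)
        ⟨⟨x.1 0, Nat.lt_succ_of_le hx.1⟩, Fin.tail x.1,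
          by rw [Fin.cons_self_tail]; exact x.2.1, hx.2⟩
      invFun := fun y => ⟨Fin.cons (y.1 : ℕ) y.2.1, y.2.2.1,
        (hiff _ _).2 ⟨Nat.le_of_lt_succ y.1.2, y.2.2.2⟩⟩
      left_inv := fun x => Subtype.ext (Fin.cons_self_tail x.1)
      right_inv := fun y => rfl }
  have hfin : ∀ n : Fin (h (c 0) + 1), Finite {x // (Fin.cons (n : ℕ) x : Fin (k + 1) → ℕ) ∈ L ∧
      colourWeight (fun i => c i.succ) x = h - Pi.single (c 0) (n : ℕ)} := fun n =>
    finite_mem_colourWeight_eq _ {x | (Fin.cons (n : ℕ) x : Fin (k + 1) → ℕ) ∈ L} _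
  rw [weightCount, Nat.card_congr e, Nat.card_sigma, Nat.cast_sum, Finset.sum_range]
  simp only [weightCount, Set.mem_ofPred_eq]

theorem weightCount_mem {ι : Type*} [Fintype ι] [DecidableEq ι] {k : ℕ} (c : Fin k → ι)
    {L : Set (Fin k → ℕ)} (hL : IsLowerSet L) :
    weightCount c L ∈ eventuallyPolynomialSpan ι := by
  induction k with
  | zero =>
    by_cases h0 : (0 : Fin 0 → ℕ) ∈ L
    · refine Submodule.subset_span ⟨fun _ n => if n = 0 then 1 else 0,
        fun _ => ⟨0, 1, fun n hn => ?_⟩, ?_⟩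
      · simp [Nat.one_le_iff_ne_zero.1 hn]
      · funext h
        rw [Finset.prod_boole]
        by_cases hh : h = 0
        · subst hh
          have : Nat.card {x // x ∈ L ∧ colourWeight c x = 0} = 1 :=
            Nat.card_eq_one_iff_exists.2 ⟨⟨0, h0, map_zero _⟩,
              fun y => Subtype.ext (Subsingleton.elim _ _)⟩
          simp [weightCount, this]
        · have : IsEmpty {x // x ∈ L ∧ colourWeight c x = h} :=
            ⟨fun x => hh (by rw [← x.2.2, Subsingleton.elim x.1 0, map_zero])⟩
          rw [weightCount, Nat.card_of_isEmpty, if_neg]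
          · simp
          · exact fun hz => hh (funext fun i => hz i (Finset.mem_univ i))
    · convert zero_mem (eventuallyPolynomialSpan ι)
      funext h
      have : IsEmpty {x // x ∈ L ∧ colourWeight c x = h} :=
        ⟨fun x => h0 (Subsingleton.elim x.1 0 ▸ x.2.1)⟩
      simp [weightCount]
  | succ k ih =>
    set M : ℕ → Set (Fin k → ℕ) := fun n => {x | (Fin.cons n x : Fin (k + 1) → ℕ) ∈ L}
    have hlow : ∀ n, IsLowerSet (M n) := fun n x y hyx hx =>
      hL (Fin.cons_le_cons.2 ⟨le_rfl, hyx⟩) hx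
    have hanti : Antitone M := fun m n hmn x hx => hL (Fin.cons_le_cons.2 ⟨hmn, le_rfl⟩) hx
    obtain ⟨n₀, hn₀⟩ := exists_forall_ge_eq_of_antitone_isLowerSet hanti hlow
    set W : Set (Fin k → ℕ) → (ι → ℕ) → ℚ := weightCount fun i => c i.succ
    have hWM : ∀ n, W (M n) ∈ eventuallyPolynomialSpan ι := fun n => ih _ (hlow n)
    have key : weightCount c L = convolveAt (c 0) 1 (W (M n₀)) +
        ∑ n ∈ Finset.range n₀, convolveAt (c 0) (Pi.single n 1) (W (M n) - W (M n₀)) := by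
      funext h
      rw [weightCount_eq_sum, Pi.add_apply, Finset.sum_apply]
      have h₁ : convolveAt (c 0) 1 (W (M n₀)) h =
          ∑ n ∈ Finset.range (h (c 0) + 1), W (M n₀) (h - Pi.single (c 0) n) := by
        simp [convolveAt]
      have h₂ : ∀ n, convolveAt (c 0) (Pi.single n 1) (W (M n) - W (M n₀)) h =
          if n ∈ Finset.range (h (c 0) + 1) then
            W (M n) (h - Pi.single (c 0) n) - W (M n₀) (h - Pi.single (c 0) n) else 0 := by
        intro n
        simp [convolveAt, Pi.single_apply]
      rw [h₁, ← sub_eq_iff_eq_add', ← Finset.sum_sub_distrib, Finset.sum_congr rfl fun n _ => h₂ n,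
        ← Finset.sum_filter]
      symm
      apply Finset.sum_subset
      · intro n hn
        exact (Finset.mem_filter.1 hn).2
      · intro n hn hn'
        have : n₀ ≤ n := by
          by_contra hlt
          exact hn' (Finset.mem_filter.2 ⟨Finset.mem_range.2 (not_le.1 hlt), hn⟩)
        rw [hn₀ n this, sub_self]
    rw [key]
    exact add_mem (convolveAt_one_mem _ (hWM n₀))
      (sum_mem fun n _ => convolveAt_single_mem _ n (sub_mem (hWM n) (hWM n₀)))

/-- The exponent vectors which are lexicographically least among those of the same multidegree
and the same image under `φ`. -/
def minimalRepresentatives {ι S : Type*} [DecidableEq ι] [AddCommMonoid S] {k : ℕ}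
    (c : Fin k → ι) (φ : (Fin k → ℕ) →+ S) : Set (Fin k → ℕ) :=
  {x | ∀ y, colourWeight c y = colourWeight c x → φ y = φ x → toLex x ≤ toLex y}

theorem isLowerSet_minimalRepresentatives {ι S : Type*} [DecidableEq ι] [AddCommMonoid S] {k : ℕ}
    (c : Fin k → ι) (φ : (Fin k → ℕ) →+ S) : IsLowerSet (minimalRepresentatives c φ) := by
  intro x z hzx hx y hw hφ
  obtain ⟨d, rfl⟩ := exists_add_of_le hzx
  have h := hx (y + d) (by simp [hw]) (by simp [hφ])
  rw [toLex_add, toLex_add] at h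
  exact le_of_add_le_add_right h

theorem weightCount_minimalRepresentatives {ι S : Type*} [DecidableEq ι] [AddCommMonoid S]
    {k : ℕ} (c : Fin k → ι) (φ : (Fin k → ℕ) →+ S) (h : ι → ℕ) (B : Finset S)
    (hB : ∀ s, s ∈ B ↔ ∃ x, colourWeight c x = h ∧ φ x = s) :
    (B.card : ℚ) = weightCount c (minimalRepresentatives c φ) h := by
  have hmem : ∀ x : {x // x ∈ minimalRepresentatives c φ ∧ colourWeight c x = h}, φ x.1 ∈ B :=
    fun x => (hB _).2 ⟨x, x.2.2, rfl⟩
  rw [weightCount, Nat.card_eq_of_bijective (fun x => (⟨φ x.1, hmem x⟩ : B)) ⟨?_, ?_⟩,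
    Nat.card_eq_fintype_card, Fintype.card_coe]
  · intro x y hxy
    have hφ : φ x.1 = φ y.1 := congrArg Subtype.val hxy
    have hw : colourWeight c x.1 = colourWeight c y.1 := x.2.2.trans y.2.2.symm
    exact Subtype.ext (toLex.injective
      (le_antisymm (x.2.1 y hw.symm hφ.symm) (y.2.1 x hw hφ)))
  · rintro ⟨s, hs⟩
    obtain ⟨x, ⟨hxw, hxφ⟩, hmin⟩ := WellFounded.has_min
      (wellFounded_lt (α := Lex (Fin k → ℕ)))
      {x | colourWeight c (ofLex x) = h ∧ φ (ofLex x) = s}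
      (by obtain ⟨x, hx⟩ := (hB s).1 hs; exact ⟨toLex x, hx⟩)
    exact ⟨⟨ofLex x, fun y hw hφ => not_lt.1 (hmin (toLex y) ⟨hw.trans hxw, hφ.trans hxφ⟩), hxw⟩,
      Subtype.ext hxφ⟩

theorem mem_sum_nsmul_iff {ι κ S : Type*} [Fintype ι] [Fintype κ] [DecidableEq ι]
    [AddCommMonoid S] [DecidableEq S] (A : ι → Finset S) (c : κ → ι) (a : κ → S)
    (hA : ∀ j s, s ∈ A j ↔ ∃ i, c i = j ∧ a i = s) (h : ι → ℕ) (s : S) :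
    s ∈ ∑ j, h j • A j ↔ ∃ x : κ → ℕ, colourWeight c x = h ∧ ∑ i, x i • a i = s := by
  constructor
  · have hadd : ∀ {g₁ g₂ : ι → ℕ} {B₁ B₂ : Finset S},
        (∀ t ∈ B₁, ∃ x : κ → ℕ, colourWeight c x = g₁ ∧ ∑ i, x i • a i = t) →
        (∀ t ∈ B₂, ∃ x : κ → ℕ, colourWeight c x = g₂ ∧ ∑ i, x i • a i = t) →
        ∀ t ∈ B₁ + B₂, ∃ x : κ → ℕ, colourWeight c x = g₁ + g₂ ∧ ∑ i, x i • a i = t := by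
      intro g₁ g₂ B₁ B₂ h₁ h₂ t ht
      obtain ⟨t₁, ht₁, t₂, ht₂, rfl⟩ := Finset.mem_add.1 ht
      obtain ⟨x₁, rfl, rfl⟩ := h₁ t₁ ht₁
      obtain ⟨x₂, rfl, rfl⟩ := h₂ t₂ ht₂
      exact ⟨x₁ + x₂, map_add _ _ _, by simp [add_nsmul, Finset.sum_add_distrib]⟩
    have hzero : ∀ t ∈ (0 : Finset S),
        ∃ x : κ → ℕ, colourWeight c x = 0 ∧ ∑ i, x i • a i = t := fun t ht =>
      ⟨0, map_zero _, by simp [Finset.mem_zero.1 ht]⟩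
    have hsingle : ∀ j n, ∀ t ∈ n • A j,
        ∃ x : κ → ℕ, colourWeight c x = Pi.single j n ∧ ∑ i, x i • a i = t := by
      intro j n
      induction n with
      | zero => simpa using hzero
      | succ n ih =>
        rw [succ_nsmul, Pi.single_add]
        refine hadd ih fun t ht => ?_
        classical
        obtain ⟨i, rfl, rfl⟩ := (hA j t).1 ht
        refine ⟨Pi.single i 1, ?_, ?_⟩
        · rw [colourWeight_apply, Finset.sum_eq_single i] <;> simp +contextual
        · simp [Pi.single_apply, ite_smul]
    have hsum : ∀ J : Finset ι, ∀ t ∈ ∑ j ∈ J, h j • A j,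
        ∃ x : κ → ℕ, colourWeight c x = ∑ j ∈ J, Pi.single j (h j) ∧ ∑ i, x i • a i = t := by
      intro J
      induction J using Finset.induction_on with
      | empty => simpa using hzero
      | insert j J hj ih =>
        rw [Finset.sum_insert hj, Finset.sum_insert hj]
        exact hadd (hsingle j (h j)) ih
    intro hs
    simpa only [Finset.univ_sum_single] using hsum Finset.univ s hs
  · rintro ⟨x, rfl, rfl⟩
    have hsplit : ∑ j, colourWeight c x j • A j = ∑ i, x i • A (c i) := by
      simp_rw [colourWeight_apply, Finset.sum_apply, ← Finset.sum_nsmul_assoc]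
      rw [Finset.sum_comm]
      refine Finset.sum_congr rfl fun i _ => ?_
      rw [Finset.sum_eq_single (c i)] <;> simp +contextual
    rw [hsplit, ← Finset.mem_coe, Finset.coe_sum]
    refine Set.finsetSum_mem_finsetSum _ _ _ fun i _ => ?_
    exact Finset.mem_coe.2 (Finset.nsmul_mem_nsmul ((hA _ _).2 ⟨i, rfl, rfl⟩))

theorem stmt_12 {S : Type*} [AddCommMonoid S] [DecidableEq S]
    (r : ℕ) (A : Fin r → Finset S) (hA : ∀ j, (A j).Nonempty) :
    ∃ p : MvPolynomial (Fin r) ℚ, ∃ N : ℕ, ∀ h : Fin r → ℕ,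
      (∀ j, N ≤ h j) →
      (((∑ j, h j • A j).card : ℚ)) = MvPolynomial.eval (fun j => (h j : ℚ)) p := by
  let e := (Fintype.equivFin (Σ j, A j)).symm
  let c : Fin (Fintype.card (Σ j, A j)) → Fin r := fun i => (e i).1
  let a : Fin (Fintype.card (Σ j, A j)) → S := fun i => (e i).2
  let φ : (Fin (Fintype.card (Σ j, A j)) → ℕ) →+ S :=
    { toFun := fun x => ∑ i, x i • a i
      map_zero' := by simp
      map_add' := fun x y => by simp [add_nsmul, Finset.sum_add_distrib] }
  have hAca : ∀ j s, s ∈ A j ↔ ∃ i, c i = j ∧ a i = s := by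
    intro j s
    constructor
    · intro hs
      have he := e.apply_symm_apply ⟨j, s, hs⟩
      exact ⟨e.symm ⟨j, s, hs⟩, congrArg Sigma.fst he,
        congrArg (fun y : Σ j, A j => (y.2 : S)) he⟩
    · rintro ⟨i, rfl, rfl⟩
      exact (e i).2.2
  obtain ⟨p, N, hp⟩ := exists_mvPolynomial_of_mem_eventuallyPolynomialSpan
    (weightCount_mem c (isLowerSet_minimalRepresentatives c φ))
  refine ⟨p, N, fun h hh => ?_⟩
  rw [← hp h hh]
  exact weightCount_minimalRepresentatives c φ h _ fun s => mem_sum_nsmul_iff A c a hAca h s
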